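/- Let d be a positive even integer and equip ℤ³ with the Mukai pairing ⟨(r,a,s),(r',a',s')⟩ = -r·s' + d·a·a' - s·r'. Let n, c₂, k, l, ℓ₁, ℓ₂ be integers with k + l = n and ℓ₁ + ℓ₂ + k·l·d = c₂, set v₁ = (1, k, k²d/2 - ℓ₁ + 1), v₂ = (1, l, l²d/2 - ℓ₂ + 1), and v = v₁ + v₂. (i) If n²d = 4c₂ - 8, then ⟨v₁,v₁⟩ + ⟨v₂,v₂⟩ + ⟨v₁,v₂⟩ + 2 ≥ ⟨v,v⟩ + 2. (ii) If n²d = 4c₂, then ⟨v₁,v₁⟩ + ⟨v₂,v₂⟩ + ⟨v₁,v₂⟩ + 2 ≥ ⟨v,v⟩ + 4. -/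

import Mathlib

/-- Mukai pairing on ℤ³: ⟨(r,a,s),(r',a',s')⟩ = -r·s' + d·a·a' - s·r'. -/
def mukaiPair (d : ℤ) (v w : ℤ × ℤ × ℤ) : ℤ :=
  -(v.1 * w.2.2) + d * v.2.1 * w.2.1 - v.2.2 * w.1

theorem stmt_5 (d : ℤ) (hd : 0 < d) (hde : Even d)
    (n c₂ k l ℓ₁ ℓ₂ : ℤ) (hkl : k + l = n) (hrel : ℓ₁ + ℓ₂ + k * l * d = c₂)
    (v₁ v₂ v : ℤ × ℤ × ℤ)
    (hv₁ : v₁ = (1, k, k ^ 2 * (d / 2) - ℓ₁ + 1))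
    (hv₂ : v₂ = (1, l, l ^ 2 * (d / 2) - ℓ₂ + 1))
    (hv : v = v₁ + v₂) :
    (n ^ 2 * d = 4 * c₂ - 8 →
      mukaiPair d v₁ v₁ + mukaiPair d v₂ v₂ + mukaiPair d v₁ v₂ + 2 ≥
        mukaiPair d v v + 2) ∧
    (n ^ 2 * d = 4 * c₂ →
      mukaiPair d v₁ v₁ + mukaiPair d v₂ v₂ + mukaiPair d v₁ v₂ + 2 ≥
        mukaiPair d v v + 4) := by
  obtain ⟨e, rfl⟩ := hde
  have he : (e + e) / 2 = e := by omega
  have hpos : 0 ≤ e * (k - l) ^ 2 := mul_nonneg (by omega) (sq_nonneg _)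
  subst hv hv₁ hv₂ hkl hrel
  simp only [mukaiPair, he, Prod.fst_add, Prod.snd_add]
  constructor
  · intro h
    nlinarith [h, hpos]
  · intro h
    nlinarith [h, hpos]
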